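/- Let A and B be nonempty finite subsets of a positive definite metric space X, with diversifiers w_{A,+} and w_{B,+} regarded as vectors indexed by A∪B by extension with zeros. Then ‖w_{A,+} − w_{B,+}‖_W ≤ √(|A∪B|_+ − |A|_+) + √(|A∪B|_+ − |B|_+), where ‖u‖_W = (Σ_{x,y∈A∪B} e^{-d(x,y)} u_x u_y)^{1/2} and |·|_+ denotes maximum diversity. -/

import Mathlib

/-!
Write `α = |A|₊`, `β = |B|₊`, `D = |A ∪ B|₊` and let `p` be the pairing of the two diversifiers
`a`, `b`. Each diversifier satisfies `‖a‖_W² = Σ a = α` (`IsDiversifier.quadW_eq`), so the claim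
amounts to the lower bound `p ≥ α + β - D - √(D - α) √(D - β)`.

Testing the supremum that defines `D` on the nonnegative vectors `s a + t b` with `s, t ≥ 0`
(`sq_sum_le`) gives `(s α + t β)² ≤ D (s² α + 2 s t p + t² β)`. The choice `s = √(D - β)`,
`t = √(D - α)` then yields the bound on `p`, with a limiting argument if one of these numbers
vanishes (`pairing_lower_bound`). In particular no diversifier of `A ∪ B` is needed.
The supremum is finite because the similarity matrix has unit diagonal and nonnegative entries,
whence `quadW s v v ≥ Σ v_x² ≥ (Σ v_x)² / #s` for nonnegative `v`.
-/

open scoped BigOperators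

/-- A metric space is positive definite if every finite subspace has positive definite
similarity matrix `(e^{-d(x,y)})`. -/
def PosDefSpace (X : Type*) [MetricSpace X] : Prop :=
  ∀ s : Finset X,
    Matrix.PosDef (Matrix.of fun x y : s => Real.exp (-dist (x : X) (y : X)))

/-- The pairing `Σ_{x,y∈s} e^{-d(x,y)} u_x v_y`. -/
noncomputable def quadW {X : Type*} [MetricSpace X] (s : Finset X) (u v : X → ℝ) : ℝ :=
  ∑ x ∈ s, ∑ y ∈ s, Real.exp (-dist x y) * u x * v y

/-- The quotient `(Σ_{x∈s} w_x)² / (Σ_{x,y∈s} e^{-d(x,y)} w_x w_y)`. -/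
noncomputable def ratioW {X : Type*} [MetricSpace X] (s : Finset X) (w : X → ℝ) : ℝ :=
  (∑ x ∈ s, w x) ^ 2 / quadW s w w

/-- The maximum diversity `|s|₊` of a finite subset `s`. -/
noncomputable def finMaxDiv {X : Type*} [MetricSpace X] (s : Finset X) : ℝ :=
  sSup {r : ℝ | ∃ w : X → ℝ,
    (∀ x ∉ s, w x = 0) ∧ w ≠ 0 ∧ (∀ x, 0 ≤ w x) ∧ r = ratioW s w}

/-- `w` is the diversifier of the finite subset `s` (extended by zero outside `s`). -/
def IsDiversifier {X : Type*} [MetricSpace X] (s : Finset X) (w : X → ℝ) : Prop :=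
  (∀ x ∉ s, w x = 0) ∧ w ≠ 0 ∧ (∀ x, 0 ≤ w x) ∧
    (∀ v : X → ℝ, (∀ x ∉ s, v x = 0) → v ≠ 0 → (∀ x, 0 ≤ v x) →
      ratioW s v ≤ ratioW s w) ∧
    ∑ x ∈ s, w x = finMaxDiv s

theorem quadW_comm {X : Type*} [MetricSpace X] (s : Finset X) (u v : X → ℝ) :
    quadW s u v = quadW s v u := by
  unfold quadW
  rw [Finset.sum_comm]
  refine Finset.sum_congr rfl fun x _ => Finset.sum_congr rfl fun y _ => ?_
  rw [dist_comm]
  ring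

theorem quadW_comb {X : Type*} [MetricSpace X] (S : Finset X) (a b : X → ℝ) (s t : ℝ) :
    quadW S (s • a + t • b) (s • a + t • b) =
      s ^ 2 * quadW S a a + 2 * s * t * quadW S a b + t ^ 2 * quadW S b b := by
  have h : quadW S (s • a + t • b) (s • a + t • b) =
      s ^ 2 * quadW S a a + s * t * quadW S a b + s * t * quadW S b a
        + t ^ 2 * quadW S b b := by
    simp only [quadW, Finset.mul_sum, ← Finset.sum_add_distrib, Pi.add_apply, Pi.smul_apply,
      smul_eq_mul]
    refine Finset.sum_congr rfl fun x _ => Finset.sum_congr rfl fun y _ => ?_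
    ring
  rw [h, quadW_comm S b a]
  ring

theorem quadW_subset {X : Type*} [MetricSpace X] {s S : Finset X} (h : s ⊆ S) (u : X → ℝ)
    (hu : ∀ x ∉ s, u x = 0) : quadW S u u = quadW s u u := by
  unfold quadW
  symm
  rw [← Finset.sum_subset h (fun x _ hx => by simp [hu x hx])]
  exact Finset.sum_congr rfl fun x _ => Finset.sum_subset h (fun y _ hy => by simp [hu y hy])

/-- Only the unit diagonal of the similarity matrix is kept. -/
theorem sum_sq_le_quadW {X : Type*} [MetricSpace X] (s : Finset X) (v : X → ℝ)
    (hv : ∀ x, 0 ≤ v x) : ∑ x ∈ s, v x ^ 2 ≤ quadW s v v := by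
  unfold quadW
  refine Finset.sum_le_sum fun x hx => ?_
  have h := Finset.single_le_sum (f := fun y => Real.exp (-dist x y) * v x * v y)
    (fun y _ => mul_nonneg (mul_nonneg (Real.exp_pos _).le (hv x)) (hv y)) hx
  simp only [dist_self, neg_zero, Real.exp_zero, one_mul] at h
  rw [sq]
  exact h

theorem quadW_pos {X : Type*} [MetricSpace X] (s : Finset X) (v : X → ℝ)
    (hs : ∀ x ∉ s, v x = 0) (h0 : v ≠ 0) (hv : ∀ x, 0 ≤ v x) : 0 < quadW s v v := by
  obtain ⟨x, hx⟩ := Function.ne_iff.mp h0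
  have hx' : v x ≠ 0 := hx
  have hxs : x ∈ s := by
    by_contra h
    exact hx' (hs x h)
  have h1 : v x ^ 2 ≤ ∑ x ∈ s, v x ^ 2 :=
    Finset.single_le_sum (f := fun x => v x ^ 2) (fun y _ => sq_nonneg _) hxs
  have h2 : 0 < v x ^ 2 := by positivity
  linarith [sum_sq_le_quadW s v hv]

/-- The supremum defining `finMaxDiv s` is over a set bounded by the cardinality of `s`. -/
theorem ratioW_le_finMaxDiv {X : Type*} [MetricSpace X] (s : Finset X) (v : X → ℝ)
    (hs : ∀ x ∉ s, v x = 0) (h0 : v ≠ 0) (hv : ∀ x, 0 ≤ v x) :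
    ratioW s v ≤ finMaxDiv s := by
  refine le_csSup ⟨(s.card : ℝ), ?_⟩ ⟨v, hs, h0, hv, rfl⟩
  rintro r ⟨w, hws, hw0, hw, rfl⟩
  unfold ratioW
  rw [div_le_iff₀ (quadW_pos s w hws hw0 hw)]
  exact sq_sum_le_card_mul_sum_sq.trans
    (mul_le_mul_of_nonneg_left (sum_sq_le_quadW s w hw) (Nat.cast_nonneg _))

theorem sq_sum_le {X : Type*} [MetricSpace X] (s : Finset X) (v : X → ℝ)
    (hs : ∀ x ∉ s, v x = 0) (hv : ∀ x, 0 ≤ v x) :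
    (∑ x ∈ s, v x) ^ 2 ≤ finMaxDiv s * quadW s v v := by
  by_cases h0 : v = 0
  · simp [h0, quadW]
  · rw [← div_le_iff₀ (quadW_pos s v hs h0 hv)]
    exact ratioW_le_finMaxDiv s v hs h0 hv

theorem IsDiversifier.finMaxDiv_pos {X : Type*} [MetricSpace X] {s : Finset X} {w : X → ℝ}
    (h : IsDiversifier s w) : 0 < finMaxDiv s := by
  obtain ⟨hs, h0, hw, -, hsum⟩ := h
  rw [← hsum]
  refine lt_of_le_of_ne (Finset.sum_nonneg fun x _ => hw x) fun he => h0 ?_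
  have hz := (Finset.sum_eq_zero_iff_of_nonneg fun x _ => hw x).1 he.symm
  ext x
  by_cases hx : x ∈ s
  · exact hz x hx
  · exact hs x hx

/-- The normalization of a diversifier: its squared norm is its total mass. -/
theorem IsDiversifier.quadW_eq {X : Type*} [MetricSpace X] {s : Finset X} {w : X → ℝ}
    (h : IsDiversifier s w) : quadW s w w = finMaxDiv s := by
  have hpos := h.finMaxDiv_pos
  obtain ⟨hs, h0, hw, hmax, hsum⟩ := h
  have hq := quadW_pos s w hs h0 hw
  have hr : finMaxDiv s = ratioW s w := by
    refine le_antisymm (csSup_le ⟨_, w, hs, h0, hw, rfl⟩ ?_) (ratioW_le_finMaxDiv s w hs h0 hw)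
    rintro r ⟨v, hvs, hv0, hv, rfl⟩
    exact hmax v hvs hv0 hv
  unfold ratioW at hr
  rw [hsum, eq_div_iff hq.ne', sq] at hr
  exact mul_left_cancel₀ hpos.ne' hr

/-- With `x = √(D - α)` and `y = √(D - β)`, this is the bound on the pairing `p` of the two
diversifiers. -/
theorem pairing_lower_bound {α β D p x y : ℝ} (hD : 0 < D) (hα : 0 < α) (hβ : 0 < β)
    (hx : 0 ≤ x) (hy : 0 ≤ y) (hxα : x ^ 2 = D - α) (hyβ : y ^ 2 = D - β)
    (h : ∀ s t : ℝ, 0 ≤ s → 0 ≤ t →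
      (s * α + t * β) ^ 2 ≤ D * (s ^ 2 * α + 2 * s * t * p + t ^ 2 * β)) :
    α + β - D - x * y ≤ p := by
  obtain rfl : α = D - x ^ 2 := by linarith
  obtain rfl : β = D - y ^ 2 := by linarith
  rcases hx.eq_or_lt with rfl | hx
  -- Here `α = D`: the hypothesis at `(1, t)` gives `2 D (β - p) ≤ t β y²` for every `t > 0`,
  -- and `t` is chosen small enough for the right-hand side to be at most `ε D`.
  · refine le_of_forall_pos_le_add fun ε hε => ?_
    have hc : 0 < (D - y ^ 2) * y ^ 2 + D := by positivity
    have ht : 0 < ε * D / ((D - y ^ 2) * y ^ 2 + D) := by positivity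
    have h1 := h 1 _ zero_le_one ht.le
    have h2 : ε * D / ((D - y ^ 2) * y ^ 2 + D) * ((D - y ^ 2) * y ^ 2 + D) = ε * D :=
      div_mul_cancel₀ _ hc.ne'
    generalize ε * D / ((D - y ^ 2) * y ^ 2 + D) = t at *
    have h3 : 0 ≤ t * (2 * D * (p - (D - y ^ 2)) + t * ((D - y ^ 2) * y ^ 2)) := by
      linarith
    have h4 := nonneg_of_mul_nonneg_right h3 ht
    have h5 : 0 ≤ D * (2 * (p - (D - y ^ 2)) + ε) := by nlinarith
    have h6 := nonneg_of_mul_nonneg_right h5 hD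
    linarith
  rcases hy.eq_or_lt with rfl | hy
  -- The symmetric case `β = D`, with the hypothesis at `(t, 1)`.
  · refine le_of_forall_pos_le_add fun ε hε => ?_
    have hc : 0 < (D - x ^ 2) * x ^ 2 + D := by positivity
    have ht : 0 < ε * D / ((D - x ^ 2) * x ^ 2 + D) := by positivity
    have h1 := h _ 1 ht.le zero_le_one
    have h2 : ε * D / ((D - x ^ 2) * x ^ 2 + D) * ((D - x ^ 2) * x ^ 2 + D) = ε * D :=
      div_mul_cancel₀ _ hc.ne'
    generalize ε * D / ((D - x ^ 2) * x ^ 2 + D) = t at *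
    have h3 : 0 ≤ t * (2 * D * (p - (D - x ^ 2)) + t * ((D - x ^ 2) * x ^ 2)) := by
      linarith
    have h4 := nonneg_of_mul_nonneg_right h3 ht
    have h5 : 0 ≤ D * (2 * (p - (D - x ^ 2)) + ε) := by nlinarith
    have h6 := nonneg_of_mul_nonneg_right h5 hD
    linarith
  have h1 := h y x hy.le hx.le
  have h2 : 0 ≤ x * y * (2 * D * p - 2 * (D - x ^ 2) * (D - y ^ 2)
      + x * y * (2 * D - x ^ 2 - y ^ 2)) := by
    linarith
  have h3 := nonneg_of_mul_nonneg_right h2 (mul_pos hx hy)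
  have h4 : 0 ≤ D * (p - (D - x ^ 2 + (D - y ^ 2) - D - x * y)) := by
    have : 0 ≤ x * y * (x ^ 2 + y ^ 2) := by positivity
    have : 0 ≤ x ^ 2 * y ^ 2 := by positivity
    linarith
  have h5 := nonneg_of_mul_nonneg_right h4 hD
  linarith

/-- `‖w_{A,+} − w_{B,+}‖_W ≤ √(|A∪B|₊ − |A|₊) + √(|A∪B|₊ − |B|₊)`. -/
theorem stmt11 {X : Type*} [MetricSpace X] [DecidableEq X] (hpd : PosDefSpace X)
    (A B : Finset X) (hA : A.Nonempty) (hB : B.Nonempty)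
    (wA wB : X → ℝ) (hwA : IsDiversifier A wA) (hwB : IsDiversifier B wB) :
    Real.sqrt (quadW (A ∪ B) (wA - wB) (wA - wB)) ≤
      Real.sqrt (finMaxDiv (A ∪ B) - finMaxDiv A) +
        Real.sqrt (finMaxDiv (A ∪ B) - finMaxDiv B) := by
  have hα := hwA.finMaxDiv_pos
  have hβ := hwB.finMaxDiv_pos
  have hAC : A ⊆ A ∪ B := Finset.subset_union_left
  have hBC : B ⊆ A ∪ B := Finset.subset_union_right
  have qA : quadW (A ∪ B) wA wA = finMaxDiv A :=
    (quadW_subset hAC wA hwA.1).trans hwA.quadW_eq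
  have qB : quadW (A ∪ B) wB wB = finMaxDiv B :=
    (quadW_subset hBC wB hwB.1).trans hwB.quadW_eq
  have sA : ∑ x ∈ A ∪ B, wA x = finMaxDiv A := by
    rw [← Finset.sum_subset hAC fun x _ hx => hwA.1 x hx]
    exact hwA.2.2.2.2
  have sB : ∑ x ∈ A ∪ B, wB x = finMaxDiv B := by
    rw [← Finset.sum_subset hBC fun x _ hx => hwB.1 x hx]
    exact hwB.2.2.2.2
  have key : ∀ s t : ℝ, 0 ≤ s → 0 ≤ t → (s * finMaxDiv A + t * finMaxDiv B) ^ 2 ≤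
      finMaxDiv (A ∪ B) * (s ^ 2 * finMaxDiv A + 2 * s * t * quadW (A ∪ B) wA wB
        + t ^ 2 * finMaxDiv B) := by
    intro s t hs ht
    have h := sq_sum_le (A ∪ B) (s • wA + t • wB)
      (fun x hx => by
        simp [hwA.1 x fun h => hx (hAC h), hwB.1 x fun h => hx (hBC h)])
      (fun x => add_nonneg (mul_nonneg hs (hwA.2.2.1 x)) (mul_nonneg ht (hwB.2.2.1 x)))
    rw [quadW_comb, qA, qB] at h
    simpa only [Pi.add_apply, Pi.smul_apply, smul_eq_mul, Finset.sum_add_distrib,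
      ← Finset.mul_sum, sA, sB] using h
  -- Monotonicity of the maximum diversity: test the vectors `wA` and `wB` alone.
  have hαD : finMaxDiv A ≤ finMaxDiv (A ∪ B) := by
    have h := key 1 0 zero_le_one le_rfl
    refine le_of_mul_le_mul_right ?_ hα
    linarith
  have hβD : finMaxDiv B ≤ finMaxDiv (A ∪ B) := by
    have h := key 0 1 le_rfl zero_le_one
    refine le_of_mul_le_mul_right ?_ hβ
    linarith
  have hx := Real.sq_sqrt (sub_nonneg.2 hαD)
  have hy := Real.sq_sqrt (sub_nonneg.2 hβD)
  have hp := pairing_lower_bound (hα.trans_le hαD) hα hβ (Real.sqrt_nonneg _)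
    (Real.sqrt_nonneg _) hx hy key
  have hdiff : quadW (A ∪ B) (wA - wB) (wA - wB) =
      finMaxDiv A - 2 * quadW (A ∪ B) wA wB + finMaxDiv B := by
    have h := quadW_comb (A ∪ B) wA wB 1 (-1)
    rw [one_smul, neg_one_smul, ← sub_eq_add_neg, qA, qB] at h
    rw [h]
    ring
  refine Real.sqrt_le_iff.2 ⟨by positivity, ?_⟩
  rw [hdiff]
  linarith
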